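/- Fix n ≥ 0 and let C be the chain complex of abelian groups in nonnegative degrees with C_p the free abelian group on the set of strictly increasing tuples (i_0 < i_1 < … < i_p) of elements of {0, …, n}, with differential d(i_0, …, i_p) = Σ_{l=0}^{p} (−1)^l (i_0, …, î_l, …, i_p) for p ≥ 1 (where î_l means that i_l is omitted) and d = 0 in degree 0. Define a degree-0 map f : C → C by f(i_0) = (i_0) in degree 0, f(i_0, i_1) = Σ_{i_0 < k ≤ i_1} (k−1, k) in degree 1, and f = 0 in degrees ≥ 2, and a degree +1 map h : C_p → C_{p+1} by h(i_0) = 0 and, for p ≥ 1, h(i_0, …, i_p) = Σ_{i_0 < k < i_1} (k−1, k, i_1, …, i_p). Then: (1) f is a chain map, i.e. d ∘ f = f ∘ d; (2) h is a chain homotopy from the identity of C to f, i.e. d ∘ h + h ∘ d = f − id in every degree; (3) h sends chains all of whose coefficients are nonnegative to chains all of whose coefficients are nonnegative. -/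

import Mathlib

namespace Paper

/-- Strictly increasing `(p+1)`-tuples `(i_0 < i_1 < … < i_p)` of elements of
`{0, …, n}`. -/
def Tup (n p : ℕ) : Type :=
  { f : Fin (p + 1) → Fin (n + 1) // StrictMono f }

instance (n p : ℕ) : DecidablePred (fun f : Fin (p + 1) → Fin (n + 1) => StrictMono f) :=
  fun f => decidable_of_iff (∀ i j, i < j → f i < f j)
    ⟨fun h _ _ hij => h _ _ hij, fun h _ _ hij => h hij⟩

instance (n p : ℕ) : Fintype (Tup n p) :=
  Subtype.fintype _

instance (n p : ℕ) : DecidableEq (Tup n p) :=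
  Subtype.instDecidableEq

/-- The degree-`p` part of the chain complex `C`: the free abelian group on the set of
strictly increasing `(p+1)`-tuples in `{0, …, n}`, realized as the group of
`ℤ`-valued functions on this (finite) set of tuples. -/
def Ch (n p : ℕ) : Type :=
  Tup n p → ℤ

instance (n p : ℕ) : AddCommGroup (Ch n p) :=
  inferInstanceAs (AddCommGroup (Tup n p → ℤ))

/-- The basis element of `Ch n p` corresponding to a tuple `σ`. -/
def basis {n p : ℕ} (σ : Tup n p) : Ch n p :=
  fun τ => if τ = σ then 1 else 0

/-- The `l`-th face of a tuple: `(i_0, …, î_l, …, i_p)`, omitting `i_l`. -/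
def face {n p : ℕ} (l : Fin (p + 2)) (σ : Tup n (p + 1)) : Tup n p :=
  ⟨σ.1 ∘ l.succAbove, σ.2.comp (Fin.strictMono_succAbove l)⟩

/-- The differential `d : C_{p+1} → C_p`,
`d(i_0, …, i_{p+1}) = ∑_l (-1)^l (i_0, …, î_l, …, i_{p+1})`. -/
def dChain (n p : ℕ) : Ch n (p + 1) → Ch n p :=
  fun x => ∑ σ : Tup n (p + 1), ∑ l : Fin (p + 2), (x σ * (-1) ^ (l : ℕ)) • basis (face l σ)

/-- The tuple `(k - 1, k)`, for `0 < k`. -/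
def pairTup (n : ℕ) (k : Fin (n + 1)) (hk : 0 < (k : ℕ)) : Tup n 1 :=
  ⟨fun j => if (j : ℕ) = 0 then ⟨(k : ℕ) - 1, by omega⟩ else k, by
    intro a b hab
    have hab' : (a : ℕ) < (b : ℕ) := hab
    have hb : (b : ℕ) < 2 := b.isLt
    have ha0 : (a : ℕ) = 0 := by omega
    have hb1 : (b : ℕ) = 1 := by omega
    dsimp only
    rw [if_pos ha0, if_neg (by omega)]
    exact Fin.mk_lt_of_lt_val (by omega)⟩

/-- The chain map `f : C → C`: the identity in degree `0`,
`f(i_0, i_1) = ∑_{i_0 < k ≤ i_1} (k-1, k)` in degree `1`, and `0` in degrees `≥ 2`. -/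
def fChain (n : ℕ) : ∀ p, Ch n p → Ch n p
  | 0 => id
  | 1 => fun x => ∑ σ : Tup n 1, ∑ k : Fin (n + 1),
      if h : σ.1 ⟨0, by omega⟩ < k ∧ k ≤ σ.1 ⟨1, by omega⟩ then
        (x σ) • basis (pairTup n k (Nat.lt_of_le_of_lt (Nat.zero_le _) h.1))
      else 0
  | _ + 2 => fun _ => 0

/-- The underlying map of the tuple `(k - 1, k, i_1, …, i_p)` obtained from
`σ = (i_0, …, i_p)` and `k`. -/
def hTupFun {n p : ℕ} (σ : Tup n (p + 1)) (k : Fin (n + 1)) :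
    Fin (p + 3) → Fin (n + 1) :=
  fun j => if (j : ℕ) = 0 then ⟨(k : ℕ) - 1, by omega⟩
    else if (j : ℕ) = 1 then k
    else σ.1 ⟨(j : ℕ) - 1, by omega⟩

/-- The tuple `(k - 1, k, i_1, …, i_p)` obtained from `σ = (i_0, …, i_p)` and
`i_0 < k < i_1`. -/
def hTup {n p : ℕ} (σ : Tup n (p + 1)) (k : Fin (n + 1))
    (h₁ : σ.1 ⟨0, by omega⟩ < k) (h₂ : k < σ.1 ⟨1, by omega⟩) : Tup n (p + 2) := by
  refine ⟨hTupFun σ k, ?_⟩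
  have hk : 0 < (k : ℕ) := Nat.lt_of_le_of_lt (Nat.zero_le _) h₁
  rw [Fin.strictMono_iff_lt_succ]
  intro i
  unfold hTupFun
  rcases Nat.lt_or_ge (i : ℕ) 1 with h0 | h0
  · have c1 : ((i.castSucc : Fin (p + 3)) : ℕ) = 0 := by
      simp only [Fin.coe_castSucc]; omega
    have c2 : ((i.succ : Fin (p + 3)) : ℕ) = 1 := by
      simp only [Fin.val_succ]; omega
    rw [if_pos c1, if_neg (by omega), if_pos c2]
    exact Fin.mk_lt_of_lt_val (by omega)
  · rcases Nat.lt_or_ge (i : ℕ) 2 with h1 | h1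
    · have c1 : ((i.castSucc : Fin (p + 3)) : ℕ) = 1 := by
        simp only [Fin.coe_castSucc]; omega
      have c2 : ((i.succ : Fin (p + 3)) : ℕ) = 2 := by
        simp only [Fin.val_succ]; omega
      rw [if_neg (by omega), if_pos c1, if_neg (by omega), if_neg (by omega)]
      refine lt_of_lt_of_le h₂ (σ.2.monotone ?_)
      simp only [Fin.le_def]
      omega
    · have c1 : ¬ ((i.castSucc : Fin (p + 3)) : ℕ) = 0 := by
        simp only [Fin.coe_castSucc]; omega
      have c1' : ¬ ((i.castSucc : Fin (p + 3)) : ℕ) = 1 := by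
        simp only [Fin.coe_castSucc]; omega
      have c2 : ¬ ((i.succ : Fin (p + 3)) : ℕ) = 0 := by
        simp only [Fin.val_succ]; omega
      have c2' : ¬ ((i.succ : Fin (p + 3)) : ℕ) = 1 := by
        simp only [Fin.val_succ]; omega
      rw [if_neg c1, if_neg c1', if_neg c2, if_neg c2']
      apply σ.2
      simp only [Fin.lt_def, Fin.coe_castSucc, Fin.val_succ]
      omega

/-- The homotopy `h : C_p → C_{p+1}`: `h(i_0) = 0` in degree `0` and
`h(i_0, …, i_p) = ∑_{i_0 < k < i_1} (k-1, k, i_1, …, i_p)` in degrees `≥ 1`. -/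
def hChain (n : ℕ) : ∀ p, Ch n p → Ch n (p + 1)
  | 0 => fun _ => 0
  | p + 1 => fun x => ∑ σ : Tup n (p + 1), ∑ k : Fin (n + 1),
      if h : σ.1 ⟨0, by omega⟩ < k ∧ k < σ.1 ⟨1, by omega⟩ then
        (x σ) • basis (hTup σ k h.1 h.2)
      else 0


def liftH {n p : ℕ} {A : Type} [AddCommGroup A] (F : Tup n p → A) : Ch n p →+ A where
  toFun x := ∑ σ, x σ • F σ
  map_zero' := by
    apply Finset.sum_eq_zero
    intro σ _
    exact zero_smul ℤ _
  map_add' x y := by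
    rw [← Finset.sum_add_distrib]
    apply Finset.sum_congr rfl
    intro σ _
    exact add_smul (x σ) (y σ) _

theorem liftH_apply {n p : ℕ} {A : Type} [AddCommGroup A] (F : Tup n p → A) (x : Ch n p) :
    liftH F x = ∑ σ, x σ • F σ := rfl

theorem liftH_basis {n p : ℕ} {A : Type} [AddCommGroup A] (F : Tup n p → A) (σ : Tup n p) :
    liftH F (basis σ) = F σ := by
  rw [liftH_apply, Finset.sum_eq_single σ]
  · simp [basis]
  · intro b _ hb
    simp [basis, hb]
  · simp

theorem ch_sum_apply {n p : ℕ} {ι : Type} (s : Finset ι) (F : ι → Ch n p) (τ : Tup n p) :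
    (∑ i ∈ s, F i) τ = ∑ i ∈ s, F i τ :=
  Finset.sum_apply (M := fun _ : Tup n p => ℤ) τ s F

theorem ch_smul_apply {n p : ℕ} (a : ℤ) (x : Ch n p) (τ : Tup n p) :
    (a • x) τ = a * x τ := rfl

theorem eq_lift {n p : ℕ} (x : Ch n p) : x = ∑ σ, x σ • basis σ := by
  funext τ
  rw [ch_sum_apply, Finset.sum_eq_single τ]
  · rw [ch_smul_apply]; simp [basis]
  · intro b _ hb
    rw [ch_smul_apply]; simp [basis, hb.symm]
  · simp

theorem hom_ext {n p : ℕ} {A : Type} [AddCommGroup A] {f g : Ch n p →+ A}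
    (h : ∀ σ, f (basis σ) = g (basis σ)) : f = g := by
  ext x
  rw [eq_lift x]
  simp only [map_sum, map_zsmul, h]

def vl {n p : ℕ} (σ : Tup n p) : Fin (p + 1) → ℕ := fun j => (σ.1 j : ℕ)

theorem vl_inj {n p : ℕ} {σ τ : Tup n p} (h : vl σ = vl τ) : σ = τ := by
  apply Subtype.ext
  funext j
  exact Fin.ext (congrFun h j)

def cc (n p : ℕ) (v : Fin (p + 1) → ℕ) : Ch n p := fun τ => if vl τ = v then 1 else 0

theorem basis_eq {n p : ℕ} (σ : Tup n p) : basis σ = cc n p (vl σ) := by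
  funext τ
  unfold basis cc
  by_cases h : τ = σ
  · simp [h]
  · rw [if_neg h, if_neg (fun h' => h (vl_inj h'))]

def Good (n : ℕ) {p : ℕ} (v : Fin (p + 1) → ℕ) : Prop := StrictMono v ∧ ∀ j, v j ≤ n

theorem good_vl {n p : ℕ} (σ : Tup n p) : Good n (vl σ) :=
  ⟨fun _ _ h => σ.2 h, fun j => Nat.lt_succ_iff.1 (σ.1 j).isLt⟩

theorem Good.ex {n p : ℕ} {v : Fin (p + 1) → ℕ} (h : Good n v) : ∃ σ : Tup n p, vl σ = v :=
  ⟨⟨fun j => ⟨v j, Nat.lt_succ_iff.2 (h.2 j)⟩, fun _ _ hab => h.1 hab⟩, rfl⟩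

def dH (n p : ℕ) : Ch n (p + 1) →+ Ch n p :=
  liftH fun σ => ∑ l : Fin (p + 2), ((-1 : ℤ) ^ (l : ℕ)) • basis (face l σ)

theorem dChain_eq (n p : ℕ) (x) : dChain n p x = dH n p x := by
  simp only [dChain, dH, liftH_apply, Finset.smul_sum, smul_smul]

theorem dH_cc {n p : ℕ} {v : Fin (p + 2) → ℕ} (h : Good n v) :
    dH n p (cc n (p + 1) v) = ∑ l : Fin (p + 2), ((-1 : ℤ) ^ (l : ℕ)) • cc n p (v ∘ l.succAbove) := by
  obtain ⟨σ, rfl⟩ := h.ex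
  rw [← basis_eq, dH, liftH_basis]
  apply Finset.sum_congr rfl
  intro l _
  rw [basis_eq]
  rfl

def hH (n p : ℕ) : Ch n (p + 1) →+ Ch n (p + 2) :=
  liftH fun σ => ∑ k : Fin (n + 1),
      if h : σ.1 ⟨0, by omega⟩ < k ∧ k < σ.1 ⟨1, by omega⟩ then
        basis (hTup σ k h.1 h.2)
      else 0

theorem hChain_eq (n p : ℕ) (x) : hChain n (p + 1) x = hH n p x := by
  simp only [hChain, hH, liftH_apply, Finset.smul_sum, smul_dite, smul_zero]

def fH (n : ℕ) : Ch n 1 →+ Ch n 1 :=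
  liftH fun σ => ∑ k : Fin (n + 1),
      if h : σ.1 ⟨0, by omega⟩ < k ∧ k ≤ σ.1 ⟨1, by omega⟩ then
        basis (pairTup n k (Nat.lt_of_le_of_lt (Nat.zero_le _) h.1))
      else 0

theorem fChain_eq (n : ℕ) (x) : fChain n 1 x = fH n x := by
  simp only [fChain, fH, liftH_apply, Finset.smul_sum, smul_dite, smul_zero]

theorem hH_cc {n p : ℕ} {v : Fin (p + 2) → ℕ} (h : Good n v) :
    hH n p (cc n (p + 1) v) = ∑ k ∈ Finset.Ioo (v 0) (v 1),
      cc n (p + 2) (Fin.cons (k - 1) (Fin.cons k (Fin.tail v) : Fin (p + 2) → ℕ)) := by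
  obtain ⟨σ, rfl⟩ := h.ex
  rw [← basis_eq, hH, liftH_basis]
  trans ∑ k : Fin (n + 1), (fun k : ℕ => if vl σ 0 < k ∧ k < vl σ 1 then
      cc n (p + 2) (Fin.cons (k - 1) (Fin.cons k (Fin.tail (vl σ)) : Fin (p + 2) → ℕ)) else 0) k
  · apply Finset.sum_congr rfl
    intro k _
    by_cases hk : σ.1 ⟨0, by omega⟩ < k ∧ k < σ.1 ⟨1, by omega⟩
    · have hk' : vl σ 0 < k ∧ k < vl σ 1 := hk
      rw [dif_pos hk]
      simp only [if_pos hk']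
      rw [basis_eq]
      congr 1
      funext j
      refine Fin.cases ?_ (fun j => ?_) j
      · rfl
      · refine Fin.cases ?_ (fun j => ?_) j
        · rfl
        · rfl
    · have hk' : ¬ (vl σ 0 < k ∧ k < vl σ 1) := hk
      rw [dif_neg hk]
      simp only [if_neg hk']
  · rw [Fin.sum_univ_eq_sum_range (fun k : ℕ => if vl σ 0 < k ∧ k < vl σ 1 then
      cc n (p + 2) (Fin.cons (k - 1) (Fin.cons k (Fin.tail (vl σ)) : Fin (p + 2) → ℕ)) else 0),
      ← Finset.sum_filter]
    apply Finset.sum_congr _ (fun _ _ => rfl)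
    ext k
    have := h.2 1
    simp only [Finset.mem_filter, Finset.mem_range, Finset.mem_Ioo]
    omega

theorem fH_cc {n : ℕ} {v : Fin 2 → ℕ} (h : Good n v) :
    fH n (cc n 1 v) = ∑ k ∈ Finset.Ioc (v 0) (v 1), cc n 1 ![k - 1, k] := by
  obtain ⟨σ, rfl⟩ := h.ex
  rw [← basis_eq, fH, liftH_basis]
  trans ∑ k : Fin (n + 1), (fun k : ℕ => if vl σ 0 < k ∧ k ≤ vl σ 1 then
      cc n 1 ![k - 1, k] else 0) k
  · apply Finset.sum_congr rfl
    intro k _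
    by_cases hk : σ.1 ⟨0, by omega⟩ < k ∧ k ≤ σ.1 ⟨1, by omega⟩
    · have hk' : vl σ 0 < k ∧ k ≤ vl σ 1 := hk
      rw [dif_pos hk]
      simp only [if_pos hk']
      rw [basis_eq]
      congr 1
      funext j
      fin_cases j <;> rfl
    · have hk' : ¬ (vl σ 0 < k ∧ k ≤ vl σ 1) := hk
      rw [dif_neg hk]
      simp only [if_neg hk']
  · rw [Fin.sum_univ_eq_sum_range (fun k : ℕ => if vl σ 0 < k ∧ k ≤ vl σ 1 then
      cc n 1 ![k - 1, k] else 0), ← Finset.sum_filter]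
    apply Finset.sum_congr _ (fun _ _ => rfl)
    ext k
    have := h.2 1
    simp only [Finset.mem_filter, Finset.mem_range, Finset.mem_Ioc]
    omega

theorem tele {A : Type} [AddCommGroup A] (g : ℕ → A) {a b : ℕ} (h : a ≤ b) :
    ∑ k ∈ Finset.Ioc a b, (g k - g (k - 1)) = g b - g a := by
  induction b, h using Nat.le_induction with
  | base => simp
  | succ b hb ih =>
    rw [← Finset.insert_Ioc_right_eq_Ioc_add_one (by omega), Finset.sum_insert (by simp), ih]
    simp

theorem sum_Ioo {A : Type} [AddCommGroup A] (g : ℕ → A) {a b : ℕ} (h : a < b) :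
    ∑ k ∈ Finset.Ioo a b, g k = ∑ k ∈ Finset.Ioc a b, g k - g b := by
  rw [← Finset.Ioo_insert_right h, Finset.sum_insert (by simp)]
  abel

theorem sum_Ioc {A : Type} [AddCommGroup A] (g : ℕ → A) {a b c : ℕ} (h : a ≤ b) (h' : b ≤ c) :
    ∑ k ∈ Finset.Ioc a c, g k = ∑ k ∈ Finset.Ioc a b, g k + ∑ k ∈ Finset.Ioc b c, g k := by
  rw [← Finset.Ioc_union_Ioc_eq_Ioc h h', Finset.sum_union]
  rw [Finset.disjoint_left]
  intro x
  simp only [Finset.mem_Ioc]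
  omega

/-- cons twice -/
def c2 {q : ℕ} (a b : ℕ) (w : Fin q → ℕ) : Fin (q + 2) → ℕ :=
  Fin.cons a (Fin.cons b w : Fin (q + 1) → ℕ)

theorem c2_eq {q : ℕ} (v : Fin (q + 2) → ℕ) :
    ∃ a b w, v = c2 a b w :=
  ⟨v 0, v 1, fun j => v j.succ.succ, by
    funext j
    refine Fin.cases ?_ (fun j => ?_) j
    · rfl
    · refine Fin.cases ?_ (fun j => ?_) j <;> rfl⟩

theorem Good.face {n p : ℕ} {v : Fin (p + 2) → ℕ} (h : Good n v) (l : Fin (p + 2)) :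
    Good n (v ∘ l.succAbove) :=
  ⟨h.1.comp (Fin.strictMono_succAbove l), fun _ => h.2 _⟩

theorem good_cons {n p : ℕ} {a : ℕ} {v : Fin (p + 1) → ℕ} :
    Good n (Fin.cons a v : Fin (p + 2) → ℕ) ↔ a < v 0 ∧ Good n v := by
  constructor
  · intro h
    refine ⟨?_, ?_, fun j => ?_⟩
    · exact h.1 (Fin.succ_pos 0)
    · intro i j hij
      exact h.1 (Fin.succ_lt_succ_iff.2 hij)
    · exact h.2 j.succ
  · rintro ⟨h1, h2⟩
    refine ⟨?_, ?_⟩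
    · rw [Fin.strictMono_iff_lt_succ]
      intro i
      refine Fin.cases ?_ (fun i => ?_) i
      · exact h1
      · exact h2.1 (Fin.castSucc_lt_succ (i := i))
    · intro j
      refine Fin.cases ?_ (fun j => ?_) j
      · exact (h1.le.trans (h2.2 0))
      · exact h2.2 j

theorem cons_face_zero {q : ℕ} (a : ℕ) (v : Fin (q + 1) → ℕ) :
    (Fin.cons a v : Fin (q + 2) → ℕ) ∘ (0 : Fin (q + 2)).succAbove = v := by
  funext j; simp

theorem cons_face_succ {q : ℕ} (a : ℕ) (v : Fin (q + 1) → ℕ) (l : Fin (q + 1)) :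
    (Fin.cons a v : Fin (q + 2) → ℕ) ∘ (l.succ).succAbove =
      (Fin.cons a (fun j => v (l.succAbove j)) : Fin (q + 1) → ℕ) := by
  funext j
  refine Fin.cases ?_ (fun j => ?_) j
  · simp
  · simp

theorem cons_face_succ' {q : ℕ} (a : ℕ) (v : Fin (q + 2) → ℕ) (l : Fin (q + 2)) :
    (Fin.cons a v : Fin (q + 3) → ℕ) ∘ (l.succ).succAbove =
      (Fin.cons a (v ∘ l.succAbove : Fin (q + 1) → ℕ) : Fin (q + 2) → ℕ) :=
  cons_face_succ a v l

/-- degree one -/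
theorem d_one {n : ℕ} {a b : ℕ} (h : Good n ![a, b]) :
    dH n 0 (cc n 1 ![a, b]) = cc n 0 ![b] - cc n 0 ![a] := by
  rw [dH_cc h, Fin.sum_univ_two]
  have e0 : ![a, b] ∘ (0 : Fin 2).succAbove = ![b] := by funext j; fin_cases j; rfl
  have e1 : ![a, b] ∘ (1 : Fin 2).succAbove = ![a] := by funext j; fin_cases j; rfl
  rw [e0, e1]
  simp [sub_eq_add_neg]

theorem d_two {n : ℕ} {a b c : ℕ} (h : Good n ![a, b, c]) :
    dH n 1 (cc n 2 ![a, b, c]) = cc n 1 ![b, c] - cc n 1 ![a, c] + cc n 1 ![a, b] := by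
  rw [dH_cc h, Fin.sum_univ_three]
  have e0 : ![a, b, c] ∘ (0 : Fin 3).succAbove = ![b, c] := by funext j; fin_cases j <;> rfl
  have e1 : ![a, b, c] ∘ (1 : Fin 3).succAbove = ![a, c] := by funext j; fin_cases j <;> rfl
  have e2 : ![a, b, c] ∘ (2 : Fin 3).succAbove = ![a, b] := by funext j; fin_cases j <;> rfl
  rw [e0, e1, e2]
  simp [sub_eq_add_neg]

theorem d_c2 {n q : ℕ} {a b : ℕ} {w : Fin (q + 1) → ℕ} (h : Good n (c2 a b w)) :
    dH n (q + 1) (cc n (q + 2) (c2 a b w)) =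
      cc n (q + 1) (Fin.cons b w) - cc n (q + 1) (Fin.cons a w)
      + ∑ l : Fin (q + 1), ((-1 : ℤ) ^ (l : ℕ)) •
        cc n (q + 1) (c2 a b (fun j : Fin q => w (l.succAbove j))) := by
  rw [dH_cc h, Fin.sum_univ_succ, Fin.sum_univ_succ]
  unfold c2
  simp only [cons_face_zero, cons_face_succ', cons_face_succ]
  simp [pow_succ, sub_eq_add_neg, add_assoc]

theorem good2 {n a b : ℕ} : Good n ![a, b] ↔ a < b ∧ b ≤ n := by
  change Good n (Fin.cons a ![b] : Fin 2 → ℕ) ↔ _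
  rw [good_cons]
  simp [Good, Subsingleton.strictMono]

theorem good3 {n a b c : ℕ} : Good n ![a, b, c] ↔ a < b ∧ b < c ∧ c ≤ n := by
  change Good n (Fin.cons a ![b, c] : Fin 3 → ℕ) ↔ _
  rw [good_cons, good2]
  simp

theorem good_c2 {n q a b : ℕ} {w : Fin (q + 1) → ℕ} :
    Good n (c2 a b w) ↔ a < b ∧ b < w 0 ∧ Good n w := by
  unfold c2
  rw [good_cons, good_cons]
  simp

theorem chain0 (n : ℕ) : (dH n 0).comp (fH n) = dH n 0 := by
  apply hom_ext
  intro σ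
  have hg := good_vl σ
  rw [basis_eq]
  generalize vl σ = v at hg
  obtain ⟨a, b, w, rfl⟩ := c2_eq v
  have e : c2 a b w = ![a, b] := by funext j; fin_cases j <;> rfl
  rw [e] at hg ⊢
  rw [AddMonoidHom.comp_apply, fH_cc hg, d_one hg, map_sum]
  have hh := good2.1 hg
  simp only [Matrix.cons_val_zero, Matrix.cons_val_one]
  rw [← tele (fun k => cc n 0 ![k]) hh.1.le]
  apply Finset.sum_congr rfl
  intro k hk
  rw [Finset.mem_Ioc] at hk
  rw [d_one]
  exact good2.2 ⟨by omega, by omega⟩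

theorem chain1 (n : ℕ) : (fH n).comp (dH n 1) = 0 := by
  apply hom_ext
  intro σ
  have hg := good_vl σ
  rw [basis_eq]
  generalize vl σ = v at hg
  have e : v = ![v 0, v 1, v 2] := by funext j; fin_cases j <;> rfl
  rw [e] at hg ⊢
  generalize v 0 = a at *
  generalize v 1 = b at *
  generalize v 2 = c at *
  have hh := good3.1 hg
  rw [AddMonoidHom.comp_apply, d_two hg, map_add, map_sub, fH_cc (good2.2 (by omega)),
    fH_cc (good2.2 (by omega)), fH_cc (good2.2 (by omega))]
  simp only [Matrix.cons_val_zero, Matrix.cons_val_one]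
  rw [sum_Ioc _ hh.1.le hh.2.1.le]
  simp

theorem htpy1 (n : ℕ) : (dH n 1).comp (hH n 0) = fH n - AddMonoidHom.id _ := by
  apply hom_ext
  intro σ
  have hg := good_vl σ
  rw [basis_eq]
  generalize vl σ = v at hg
  have e : v = ![v 0, v 1] := by funext j; fin_cases j <;> rfl
  rw [e] at hg ⊢
  generalize v 0 = a at *
  generalize v 1 = b at *
  have hh := good2.1 hg
  rw [AddMonoidHom.comp_apply, AddMonoidHom.sub_apply, fH_cc hg, hH_cc hg, map_sum]
  simp only [Matrix.cons_val_zero, Matrix.cons_val_one, AddMonoidHom.id_apply]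
  have : ∀ k ∈ Finset.Ioo a b, dH n 1 (cc n 2 (Fin.cons (k - 1) (Fin.cons k (Fin.tail ![a, b]) : Fin 2 → ℕ)))
      = (cc n 1 ![k, b] - cc n 1 ![k - 1, b]) + cc n 1 ![k - 1, k] := by
    intro k hk
    rw [Finset.mem_Ioo] at hk
    have e : (Fin.cons (k - 1) (Fin.cons k (Fin.tail ![a, b]) : Fin 2 → ℕ) : Fin 3 → ℕ)
      = ![k - 1, k, b] := by funext j; fin_cases j <;> rfl
    rw [e, d_two (good3.2 (by omega))]
  rw [Finset.sum_congr rfl this, Finset.sum_add_distrib, sum_Ioo _ hh.1, sum_Ioo _ hh.1,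
    tele (fun k => cc n 1 ![k, b]) hh.1.le]
  abel

theorem h_c2 {n q a b : ℕ} {w : Fin q → ℕ} (hg : Good n (c2 a b w)) :
    hH n q (cc n (q + 1) (c2 a b w)) = ∑ k ∈ Finset.Ioo a b,
      cc n (q + 2) (c2 (k - 1) k (Fin.cons b w : Fin (q + 1) → ℕ)) := by
  rw [hH_cc hg]
  rfl

theorem cons_eq_c2 {q : ℕ} (a : ℕ) (w : Fin (q + 1) → ℕ) :
    (Fin.cons a w : Fin (q + 2) → ℕ) = c2 a (w 0) (Fin.tail w) := by
  unfold c2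
  rw [Fin.cons_self_tail]

theorem h_cons {n q a : ℕ} {w : Fin (q + 1) → ℕ} (ha : a < w 0) (hg : Good n w) :
    hH n q (cc n (q + 1) (Fin.cons a w)) = ∑ k ∈ Finset.Ioo a (w 0),
      cc n (q + 2) (c2 (k - 1) k w) := by
  have hg : Good n (Fin.cons a w : Fin (q + 2) → ℕ) := good_cons.2 ⟨ha, hg⟩
  rw [cons_eq_c2] at hg ⊢
  rw [h_c2 hg, Fin.cons_self_tail]

theorem htpy2 (n q : ℕ) : (dH n (q + 2)).comp (hH n (q + 1)) + (hH n q).comp (dH n (q + 1))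
    = - AddMonoidHom.id _ := by
  apply hom_ext
  intro σ
  have hg := good_vl σ
  rw [basis_eq]
  generalize vl σ = v at hg
  obtain ⟨a, b, w, rfl⟩ := c2_eq v
  have hh := good_c2.1 hg
  simp only [AddMonoidHom.add_apply, AddMonoidHom.comp_apply, AddMonoidHom.neg_apply,
    AddMonoidHom.id_apply]
  have h1 : ∀ k ∈ Finset.Ioo a b, dH n (q + 2) (cc n (q + 3) (c2 (k - 1) k (Fin.cons b w : Fin (q + 2) → ℕ)))
      = (cc n (q + 2) (c2 k b w) - cc n (q + 2) (c2 (k - 1) b w))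
        + (cc n (q + 2) (c2 (k - 1) k w)
        - ∑ l : Fin (q + 1), ((-1 : ℤ) ^ (l : ℕ)) •
          cc n (q + 2) (c2 (k - 1) k (Fin.cons b (fun j : Fin q => w (l.succAbove j)) : Fin (q + 1) → ℕ))) := by
    intro k hk
    rw [Finset.mem_Ioo] at hk
    rw [d_c2 (good_c2.2 ⟨by omega, by simpa using hk.2, good_cons.2 hh.2⟩), Fin.sum_univ_succ]
    have e0 : (fun j => (Fin.cons b w : Fin (q + 2) → ℕ) ((0 : Fin (q + 2)).succAbove j)) = w :=
      cons_face_zero b w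
    have e1 : ∀ l : Fin (q + 1), (fun j => (Fin.cons b w : Fin (q + 2) → ℕ) (l.succ.succAbove j))
        = (Fin.cons b (fun j : Fin q => w (l.succAbove j)) : Fin (q + 1) → ℕ) :=
      fun l => cons_face_succ b w l
    simp only [e0, e1]
    simp [pow_succ, sub_eq_add_neg, c2]
  have gl : ∀ l : Fin (q + 1), Good n (c2 a b (fun j : Fin q => w (l.succAbove j))) := by
    intro l
    have := hg.face l.succ.succ
    unfold c2 at this
    rwa [cons_face_succ', cons_face_succ] at this
  rw [h_c2 hg, map_sum, Finset.sum_congr rfl h1, Finset.sum_add_distrib,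
    sum_Ioo _ hh.1, tele (fun k => cc n (q + 2) (c2 k b w)) hh.1.le, Finset.sum_sub_distrib, sum_Ioo _ hh.1,
    Finset.sum_comm,
    d_c2 hg, map_add, map_sub, map_sum, h_cons hh.2.1 hh.2.2, h_cons (hh.1.trans hh.2.1) hh.2.2,
    sum_Ioo _ hh.2.1, sum_Ioo _ (hh.1.trans hh.2.1), sum_Ioc _ hh.1.le hh.2.1.le]
  simp only [map_zsmul, h_c2 (gl _), Finset.smul_sum]
  abel

theorem fChain_eq' (n : ℕ) (x : Ch n 1) : fChain n (0 + 1) x = fH n x := fChain_eq n x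

theorem steiner_homotopy (n : ℕ) :
    (∀ p, dChain n p ∘ fChain n (p + 1) = fChain n p ∘ dChain n p) ∧
    (dChain n 0 ∘ hChain n 0 = fun x => fChain n 0 x - x) ∧
    (∀ p, (fun x => dChain n (p + 1) (hChain n (p + 1) x) + hChain n p (dChain n p x)) =
      fun x => fChain n (p + 1) x - x) ∧
    (∀ p (x : Ch n p), (∀ σ, 0 ≤ x σ) → ∀ σ, 0 ≤ hChain n p x σ) := by
  refine ⟨?_, ?_, ?_, ?_⟩
  · rintro (_ | _ | p)
    · funext x
      simp only [Function.comp, dChain_eq, fChain_eq']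
      exact DFunLike.congr_fun (chain0 n) x
    · funext x
      simp only [Function.comp, dChain_eq, fChain_eq']
      have := DFunLike.congr_fun (chain1 n) x
      refine Eq.trans ?_ this.symm
      exact map_zero _
    · funext x
      simp only [Function.comp, dChain_eq]
      exact map_zero _
  · funext x
    simp only [Function.comp, dChain_eq]
    refine (map_zero _).trans (sub_self x).symm
  · rintro (_ | p)
    · funext x
      simp only [dChain_eq, fChain_eq', hChain_eq]
      have := DFunLike.congr_fun (htpy1 n) x
      exact (add_zero _).trans this
    · funext x
      simp only [dChain_eq, hChain_eq]
      have := DFunLike.congr_fun (htpy2 n p) x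
      exact this.trans (zero_sub x).symm
  · rintro (_ | p) x hx σ
    · exact le_refl (0 : ℤ)
    · simp only [hChain]
      rw [ch_sum_apply]
      apply Finset.sum_nonneg
      intro τ _
      rw [ch_sum_apply]
      apply Finset.sum_nonneg
      intro k _
      split_ifs with h
      · rw [ch_smul_apply]
        apply mul_nonneg (hx τ)
        unfold basis
        split_ifs <;> simp
      · exact le_refl (0 : ℤ)

end Paper
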